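/- arXiv:2510.14023 — 3 statements merged into one kernel-verified Lean document; each statement's English description precedes it below -/
import Mathlib

section
/- Let E be an additive commutative group, ξ : ℝ → E, n ∈ ℕ, τ ∈ ℝ, and k a positive natural number. Let A_l (for l = 0, 1, …, (k−1)n) denote the coefficient of x^l in the polynomial (1 + x + ⋯ + x^{k−1})^n. Then for every t ∈ ℝ, ξ^{(n)}(t, kτ) = Σ_{l=0}^{(k−1)n} A_l · ξ^{(n)}(t − lτ, τ). -/
/-!
Let `S` be the operator `f ↦ f(· - τ)` on functions `ℝ → E`. The binomial theorem gives
`ξ^{(n)}(·, τ) = (1 - S)^n ξ` (`nthIncrement_eq_pow`), and the shift by `kτ` is `S^k`. Hence the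
claim is the factorization `(1 - S^k)^n = (1 + S + ⋯ + S^{k-1})^n (1 - S)^n` in the endomorphism
ring, with the first factor expanded as the polynomial `(1 + X + ⋯ + X^{k-1})^n` evaluated at `S`.
-/

/-- The n-th increment of `ξ` with step `τ`:
`ξ^{(n)}(t,τ) = ∑_{l=0}^{n} (−1)^l (n choose l) ξ(t − lτ)`. -/
def nthIncrement {E : Type*} [AddCommGroup E] (ξ : ℝ → E) (n : ℕ) (τ t : ℝ) : E :=
  ∑ l ∈ Finset.range (n + 1), ((-1 : ℤ) ^ l * (n.choose l : ℤ)) • ξ (t - (l : ℝ) * τ)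

/-- The shift operator `f ↦ f(· - τ)`, as a `ℤ`-linear endomorphism of `ℝ → E`. -/
def shiftEnd (E : Type*) [AddCommGroup E] (τ : ℝ) : Module.End ℤ (ℝ → E) where
  toFun f t := f (t - τ)
  map_add' _ _ := rfl
  map_smul' _ _ := rfl

lemma shiftEnd_pow_apply {E : Type*} [AddCommGroup E] (τ : ℝ) (l : ℕ) (f : ℝ → E) (t : ℝ) :
    (shiftEnd E τ ^ l) f t = f (t - (l : ℝ) * τ) := by
  induction l generalizing t with
  | zero => simp
  | succ l ih =>
    rw [pow_succ', Module.End.mul_apply]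
    change (shiftEnd E τ ^ l) f (t - τ) = _
    rw [ih]
    congr 1
    push_cast
    ring

lemma shiftEnd_natCast_mul (E : Type*) [AddCommGroup E] (τ : ℝ) (k : ℕ) :
    shiftEnd E ((k : ℝ) * τ) = shiftEnd E τ ^ k := by
  refine LinearMap.ext fun f => funext fun t => ?_
  rw [shiftEnd_pow_apply]
  rfl

lemma nthIncrement_eq_pow {E : Type*} [AddCommGroup E] (ξ : ℝ → E) (n : ℕ) (τ t : ℝ) :
    nthIncrement ξ n τ t = ((1 - shiftEnd E τ) ^ n) ξ t := by
  have h : (1 - shiftEnd E τ) ^ n = ∑ l ∈ Finset.range (n + 1),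
      ((-1 : ℤ) ^ l * (n.choose l : ℤ)) • shiftEnd E τ ^ l := by
    rw [sub_eq_neg_add, (Commute.one_right _).add_pow]
    refine Finset.sum_congr rfl fun l _ => ?_
    rw [neg_pow, one_pow, mul_one, zsmul_eq_mul]
    push_cast
    rw [mul_assoc, mul_assoc, (Nat.cast_commute _ _).eq]
  simp only [h, LinearMap.sum_apply, Finset.sum_apply, LinearMap.smul_apply, Pi.smul_apply,
    shiftEnd_pow_apply, nthIncrement]

lemma natDegree_geom_sum_pow_le (k n : ℕ) :
    ((∑ i ∈ Finset.range k, (Polynomial.X : Polynomial ℤ) ^ i) ^ n).natDegree ≤ (k - 1) * n := by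
  rw [mul_comm]
  refine Polynomial.natDegree_pow_le_of_le n (Polynomial.natDegree_sum_le_of_forall_le _ _ ?_)
  intro i hi
  rw [Polynomial.natDegree_X_pow]
  have := Finset.mem_range.mp hi
  omega

/-- With `A_l` the coefficient of `x^l` in `(1 + x + ⋯ + x^{k−1})^n`, one has
`ξ^{(n)}(t, kτ) = ∑_{l=0}^{(k−1)n} A_l ξ^{(n)}(t − lτ, τ)`. -/
theorem nthIncrement_mul_step (E : Type*) [AddCommGroup E] (ξ : ℝ → E) (n : ℕ) (τ : ℝ)
    (k : ℕ) (hk : 0 < k) (t : ℝ) :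
    nthIncrement ξ n ((k : ℝ) * τ) t
      = ∑ l ∈ Finset.range ((k - 1) * n + 1),
          (((∑ i ∈ Finset.range k, (Polynomial.X : Polynomial ℤ) ^ i) ^ n).coeff l) •
            nthIncrement ξ n τ (t - (l : ℝ) * τ) := by
  have hfac : (1 - shiftEnd E τ ^ k) ^ n =
      Polynomial.aeval (shiftEnd E τ)
        ((∑ i ∈ Finset.range k, (Polynomial.X : Polynomial ℤ) ^ i) ^ n) *
      (1 - shiftEnd E τ) ^ n := by
    have hX : (1 - (Polynomial.X : Polynomial ℤ) ^ k) ^ n =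
        (∑ i ∈ Finset.range k, (Polynomial.X : Polynomial ℤ) ^ i) ^ n *
          (1 - Polynomial.X) ^ n := by
      rw [← mul_pow, geom_sum_mul_neg]
    simpa using congrArg (Polynomial.aeval (shiftEnd E τ)) hX
  rw [nthIncrement_eq_pow, shiftEnd_natCast_mul, hfac,
    Polynomial.aeval_eq_sum_range' (Nat.lt_succ_of_le (natDegree_geom_sum_pow_le k n))]
  simp only [Module.End.mul_apply, LinearMap.sum_apply, Finset.sum_apply, LinearMap.smul_apply,
    Pi.smul_apply, shiftEnd_pow_apply, nthIncrement_eq_pow, Nat.succ_eq_add_one]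
end

section
/- Let n ∈ ℕ and let m : ℝ → ℝ be a continuous function whose n-th finite difference with step τ is independent of the base point: assume that for every τ ∈ ℝ there is a value c^{(n)}(τ) such that Σ_{l=0}^{n} (−1)^l (n choose l) m(t − lτ) = c^{(n)}(τ) for all t ∈ ℝ. Then there exists a constant c ∈ ℝ such that c^{(n)}(τ) = c · τ^n for every τ ∈ ℝ. -/
/-!
Write `Δ_h` for the forward difference operator and `S_h` for the shift by `h`. The hypothesis says
that `Δ_{-τ}^n m` is the constant function `(-1)^n c(τ)`. The identities
`Δ_{kh} = (1 + S_h + ⋯ + S_h^{k-1}) Δ_h` and `Δ_{-h} = -S_{-h} Δ_h` express the difference with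
another step as `A Δ_h`, where `A` commutes with `Δ_h` and acts on constants as multiplication by
`k`, respectively `-1`. Taking `n`-th powers gives `c(kτ) = k^n c(τ)` and `c(-τ) = (-1)^n c(τ)`,
hence `c(x) = c(1) x^n` for rational `x`, and continuity of `c` extends this to all real `x`.
-/

open fwdDiff_aux in
/-- If `Δ_{h'} = A Δ_h` with `A` commuting with `Δ_h` and scaling constants by `a`, and `Δ_h^n f` is
the constant `d`, then `Δ_{h'}^n f` is the constant `a^n d`. -/
lemma fwdDiff_iter_of_factor (n : ℕ) (f : ℝ → ℝ) (h h' d a : ℝ) (A : Module.End ℤ (ℝ → ℝ))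
    (hA : fwdDiffₗ ℝ ℝ h' = A * fwdDiffₗ ℝ ℝ h) (hcomm : Commute A (fwdDiffₗ ℝ ℝ h))
    (hconst : ∀ e : ℝ, A (fun _ ↦ e) = fun _ ↦ a * e)
    (hd : (fwdDiff h)^[n] f = fun _ ↦ d) :
    (fwdDiff h')^[n] f = fun _ ↦ a ^ n * d := by
  rw [← coe_fwdDiffₗ_pow] at hd ⊢
  rw [hA, hcomm.mul_pow, Module.End.mul_apply, hd]
  clear hd
  induction n with
  | zero => simp
  | succ n ih => rw [pow_succ', Module.End.mul_apply, ih, hconst, pow_succ']; ext; ring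

open fwdDiff_aux in
lemma shiftₗ_pow_apply (h : ℝ) (k : ℕ) (f : ℝ → ℝ) (y : ℝ) :
    (shiftₗ ℝ ℝ h ^ k) f y = f (y + k * h) := by
  induction k generalizing y with
  | zero => simp
  | succ k ih =>
    rw [pow_succ', Module.End.mul_apply, shiftₗ_apply, ih]
    push_cast
    congr 1
    ring

open fwdDiff_aux in
lemma fwdDiff_iter_natCast_mul (n k : ℕ) (f : ℝ → ℝ) (h d : ℝ)
    (hd : (fwdDiff h)^[n] f = fun _ ↦ d) :
    (fwdDiff (k * h))^[n] f = fun _ ↦ (k : ℝ) ^ n * d := by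
  have hD : fwdDiffₗ ℝ ℝ h = shiftₗ ℝ ℝ h - 1 := by simp [shiftₗ]
  refine fwdDiff_iter_of_factor n f h _ d k (∑ i ∈ Finset.range k, shiftₗ ℝ ℝ h ^ i) ?_ ?_ ?_ hd
  · rw [hD, geom_sum_mul]
    ext g y
    simp [shiftₗ_pow_apply, fwdDiff]
  · rw [hD]
    exact (Commute.sum_left _ _ _ fun i _ ↦ (Commute.refl _).pow_left i).sub_right
      (Commute.one_right _)
  · intro e
    ext y
    simp [shiftₗ_pow_apply]

open fwdDiff_aux in
lemma fwdDiff_iter_neg (n : ℕ) (f : ℝ → ℝ) (h d : ℝ)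
    (hd : (fwdDiff h)^[n] f = fun _ ↦ d) :
    (fwdDiff (-h))^[n] f = fun _ ↦ (-1 : ℝ) ^ n * d := by
  refine fwdDiff_iter_of_factor n f h _ d (-1) (-shiftₗ ℝ ℝ (-h)) ?_ ?_ ?_ hd
  · ext g y
    simp [shiftₗ_apply, fwdDiff]
  · ext g y
    simp [shiftₗ_apply, fwdDiff, add_right_comm]
  · intro e
    ext y
    simp [shiftₗ_apply]

/-- If `m : ℝ → ℝ` is continuous and its n-th finite difference with step `τ` does not
depend on the base point `t`, i.e. equals `c^{(n)}(τ)` for all `t`, then there is a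
constant `c` with `c^{(n)}(τ) = c τ^n` for every `τ`. -/
theorem mean_value_of_stationary_increment (n : ℕ) (m : ℝ → ℝ) (hm : Continuous m)
    (c : ℝ → ℝ)
    (hc : ∀ τ t : ℝ, ∑ l ∈ Finset.range (n + 1),
        (-1 : ℝ) ^ l * (n.choose l : ℝ) * m (t - (l : ℝ) * τ) = c τ) :
    ∃ C : ℝ, ∀ τ : ℝ, c τ = C * τ ^ n := by
  have hD (τ : ℝ) : (fwdDiff (-τ))^[n] m = fun _ ↦ (-1 : ℝ) ^ n * c τ := by
    ext t
    rw [fwdDiff_iter_eq_sum_shift, ← hc τ t, Finset.mul_sum]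
    refine Finset.sum_congr rfl fun l hl ↦ ?_
    have hl' : l ≤ n := Nat.lt_succ_iff.mp (Finset.mem_range.mp hl)
    -- `(-1)^(n-l) = (-1)^n (-1)^l`, since the two sides differ by `(-1)^(2l)`
    have hs : (-1 : ℝ) ^ (n - l) = (-1) ^ n * (-1) ^ l := by
      obtain ⟨j, rfl⟩ := Nat.exists_eq_add_of_le hl'
      rw [Nat.add_sub_cancel_left, pow_add, mul_right_comm, ← mul_pow]
      simp
    simp only [zsmul_eq_mul, nsmul_eq_mul]
    push_cast
    rw [hs, mul_neg, ← sub_eq_add_neg]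
    ring
  have hne : (-1 : ℝ) ^ n ≠ 0 := pow_ne_zero _ (by norm_num)
  have hnat (k : ℕ) (τ : ℝ) : c (k * τ) = (k : ℝ) ^ n * c τ := by
    have h1 := fwdDiff_iter_natCast_mul n k m (-τ) _ (hD τ)
    rw [mul_neg, hD] at h1
    have h2 := congrFun h1 0
    apply mul_left_cancel₀ hne
    linarith
  have hneg (τ : ℝ) : c (-τ) = (-1 : ℝ) ^ n * c τ := by
    have h1 := fwdDiff_iter_neg n m (-τ) _ (hD τ)
    rw [hD] at h1
    exact mul_left_cancel₀ hne (congrFun h1 0)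
  have hint (k : ℤ) (τ : ℝ) : c (k * τ) = (k : ℝ) ^ n * c τ := by
    obtain ⟨j, rfl | rfl⟩ := k.eq_nat_or_neg
    · exact_mod_cast hnat j τ
    · push_cast
      rw [neg_mul, hneg, hnat, neg_pow (j : ℝ), mul_assoc]
  have hcont : Continuous c := by
    have : c = fun τ ↦ ∑ l ∈ Finset.range (n + 1),
        (-1 : ℝ) ^ l * (n.choose l : ℝ) * m (0 - (l : ℝ) * τ) := funext fun τ ↦ (hc τ 0).symm
    rw [this]
    fun_prop
  have hrat (q : ℚ) : c q = c 1 * (q : ℝ) ^ n := by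
    have hq : (q.den : ℝ) ≠ 0 := by exact_mod_cast q.den_ne_zero
    have hmul : (q.den : ℝ) * q = q.num := by exact_mod_cast q.den_mul_eq_num
    have h1 := hnat q.den q
    have h2 := hint q.num 1
    rw [hmul] at h1
    rw [mul_one, h1, ← hmul, mul_pow] at h2
    apply mul_left_cancel₀ (pow_ne_zero n hq)
    linarith
  have hext : c = fun x ↦ c 1 * x ^ n :=
    (Rat.denseRange_cast (𝕜 := ℝ)).equalizer hcont (by fun_prop) (funext hrat)
  exact ⟨c 1, congrFun hext⟩
end

section
/- Let n ∈ ℕ and let F be a finite Borel measure on ℝ with F({0}) = 0. Define D(t, τ₁, τ₂) = ∫_ℝ e^{iλt} (1 − e^{−iτ₁λ})^n (1 − e^{iτ₂λ})^n (1 + λ²)^n / λ^{2n} dF(λ) for t ∈ ℝ and τ₁, τ₂ > 0. Then D is positive semidefinite in the following sense: for every m ∈ ℕ, all complex numbers c_1, …, c_m, all reals t_1, …, t_m, and all positive reals τ_1, …, τ_m, the sum Σ_{j=1}^{m} Σ_{k=1}^{m} c_j · conj(c_k) · D(t_j − t_k, τ_j, τ_k) is a nonnegative real number. -/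
/-!
The kernel is a Gram kernel: for every `x`, the integrand of `D (t j - t k) (τ j) (τ k)` equals
`φ_j x * conj (φ_k x)`, where
`φ_j x = e^{i x t_j} ((1 - e^{-i τ_j x}) (1 + i x) / (i x)) ^ n` (`specFactor`).
Each `φ_j` is bounded, by `(|τ_j| + 2) ^ n`, so these products are integrable for the finite measure
`F`, and the double sum equals the integral of `|∑ j, c_j φ_j x| ^ 2`.
-/

open Complex MeasureTheory

/-- The spectral factor `e^{ixt} ((1 - e^{-iτx}) (1 + ix) / (ix)) ^ n`. At `x = 0` the division
convention makes the base `0`, which agrees with the value of the integrand of `D` there. -/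
noncomputable def specFactor (n : ℕ) (t τ x : ℝ) : ℂ :=
  exp (I * x * t) * ((1 - exp (-(I * τ * x))) * ((1 + I * x) / (I * x))) ^ n

lemma specFactor_mul_conj (n : ℕ) (t s τ σ x : ℝ) :
    exp (I * x * (t - s : ℝ)) * (1 - exp (-(I * τ * x))) ^ n * (1 - exp (I * σ * x)) ^ n *
        (((1 + x ^ 2) ^ n / x ^ (2 * n) : ℝ) : ℂ) =
      specFactor n t τ x * (starRingEnd ℂ) (specFactor n s σ x) := by
  have hw : (((1 + x ^ 2) ^ n / x ^ (2 * n) : ℝ) : ℂ) =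
      ((1 + I * x) / (I * x)) ^ n * ((1 - I * x) / (-(I * x))) ^ n := by
    rw [← mul_pow, pow_mul, ← div_pow, div_mul_div_comm]
    push_cast
    congr 2 <;> ring_nf <;> simp
  have he : exp (I * x * (t - s : ℝ)) = exp (I * x * t) * exp (-(I * x * s)) := by
    rw [← Complex.exp_add]
    push_cast
    ring_nf
  rw [hw, he]
  simp only [specFactor, map_mul, map_pow, map_sub, map_div₀, map_add, map_one, map_neg,
    ← Complex.exp_conj, conj_I, conj_ofReal, neg_mul, neg_neg, ← sub_eq_add_neg, mul_pow]
  ring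

lemma norm_specFactor_le (n : ℕ) (t τ x : ℝ) : ‖specFactor n t τ x‖ ≤ (|τ| + 2) ^ n := by
  have h1 : ‖exp (I * x * t)‖ = 1 := by
    rw [show I * x * t = ((x * t : ℝ) : ℂ) * I by push_cast; ring, norm_exp_ofReal_mul_I]
  rw [specFactor, norm_mul, h1, one_mul, norm_pow]
  refine pow_le_pow_left₀ (norm_nonneg _) ?_ n
  rcases eq_or_ne x 0 with rfl | hx
  · simp; positivity
  have he : -(I * τ * x) = I * ((-(τ * x) : ℝ) : ℂ) := by push_cast; ring
  have h2 : ‖1 - exp (-(I * τ * x))‖ ≤ |τ| * |x| := by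
    rw [norm_sub_rev, he]
    simpa [abs_mul] using Real.norm_exp_I_mul_ofReal_sub_one_le (x := -(τ * x))
  have h3 : ‖1 - exp (-(I * τ * x))‖ ≤ 2 := by
    refine (norm_sub_le _ _).trans ?_
    rw [he, mul_comm I, norm_exp_ofReal_mul_I]
    norm_num
  have hx' : 0 < |x| := abs_pos.2 hx
  have h4 : ‖1 + I * x‖ ≤ 1 + |x| := by
    simpa using norm_add_le (1 : ℂ) (I * x)
  rw [norm_mul, norm_div, show ‖I * (x : ℂ)‖ = |x| by simp, ← mul_div_assoc, div_le_iff₀ hx']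
  calc ‖1 - exp (-(I * τ * x))‖ * ‖1 + I * x‖
      ≤ ‖1 - exp (-(I * τ * x))‖ * (1 + |x|) := by gcongr
    _ = ‖1 - exp (-(I * τ * x))‖ + ‖1 - exp (-(I * τ * x))‖ * |x| := by ring
    _ ≤ |τ| * |x| + 2 * |x| := by gcongr
    _ = (|τ| + 2) * |x| := by ring

lemma measurable_specFactor (n : ℕ) (t τ : ℝ) : Measurable (specFactor n t τ) := by
  unfold specFactor
  fun_prop

lemma integrable_specFactor_mul_conj (n : ℕ) (F : Measure ℝ) [IsFiniteMeasure F] (t s τ σ : ℝ) :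
    Integrable (fun x => specFactor n t τ x * (starRingEnd ℂ) (specFactor n s σ x)) F := by
  refine Integrable.of_bound (C := (|τ| + 2) ^ n * (|σ| + 2) ^ n) ?_ (.of_forall fun x => ?_)
  · exact ((measurable_specFactor n t τ).mul
      (continuous_conj.measurable.comp (measurable_specFactor n s σ))).aestronglyMeasurable
  · rw [norm_mul, RCLike.norm_conj]
    exact mul_le_mul (norm_specFactor_le ..) (norm_specFactor_le ..) (norm_nonneg _) (by positivity)

/-- Positive semidefiniteness of the candidate structural function
`D(t,τ₁,τ₂) = ∫ e^{iλt}(1 − e^{−iτ₁λ})^n (1 − e^{iτ₂λ})^n (1+λ²)^n/λ^{2n} dF(λ)`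
of a stationary n-th increment with finite spectral measure `F` with `F({0}) = 0`:
for all `c_j ∈ ℂ`, `t_j ∈ ℝ`, `τ_j > 0`, the double sum
`∑_j ∑_k c_j conj(c_k) D(t_j − t_k, τ_j, τ_k)` is a nonnegative real number. -/
theorem structural_function_posdef (n : ℕ) (F : Measure ℝ) [IsFiniteMeasure F]
    (hF0 : F {(0 : ℝ)} = 0) (D : ℝ → ℝ → ℝ → ℂ)
    (hD : ∀ t τ₁ τ₂ : ℝ, 0 < τ₁ → 0 < τ₂ →
      D t τ₁ τ₂ = ∫ x : ℝ, Complex.exp (Complex.I * x * t) *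
        (1 - Complex.exp (-(Complex.I * τ₁ * x))) ^ n *
        (1 - Complex.exp (Complex.I * τ₂ * x)) ^ n *
        (((1 + x ^ 2) ^ n / x ^ (2 * n) : ℝ) : ℂ) ∂F) :
    ∀ (m : ℕ) (c : Fin m → ℂ) (t : Fin m → ℝ) (τ : Fin m → ℝ), (∀ j, 0 < τ j) →
      0 ≤ (∑ j, ∑ k, c j * (starRingEnd ℂ) (c k) * D (t j - t k) (τ j) (τ k)).re ∧
      (∑ j, ∑ k, c j * (starRingEnd ℂ) (c k) * D (t j - t k) (τ j) (τ k)).im = 0 := by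
  intro m c t τ hτ
  have key : (∑ j, ∑ k, c j * (starRingEnd ℂ) (c k) * D (t j - t k) (τ j) (τ k)) =
      ((∫ x, normSq (∑ j, c j * specFactor n (t j) (τ j) x) ∂F : ℝ) : ℂ) := by
    rw [← integral_complex_ofReal]
    have hpt : ∀ x : ℝ, ((normSq (∑ j, c j * specFactor n (t j) (τ j) x) : ℝ) : ℂ) =
        ∑ j, ∑ k, c j * (starRingEnd ℂ) (c k) *
          (specFactor n (t j) (τ j) x * (starRingEnd ℂ) (specFactor n (t k) (τ k) x)) := by
      intro x
      rw [← mul_conj, map_sum, Finset.sum_mul_sum]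
      refine Finset.sum_congr rfl fun j _ => Finset.sum_congr rfl fun k _ => ?_
      rw [map_mul]
      ring
    have hint := fun j k => (integrable_specFactor_mul_conj n F (t j) (t k) (τ j) (τ k)).const_mul
      (c j * (starRingEnd ℂ) (c k))
    simp_rw [hpt]
    rw [integral_finsetSum _ fun j _ => integrable_finsetSum _ fun k _ => hint j k]
    refine Finset.sum_congr rfl fun j _ => ?_
    rw [integral_finsetSum _ fun k _ => hint j k]
    refine Finset.sum_congr rfl fun k _ => ?_
    rw [integral_const_mul, hD _ _ _ (hτ j) (hτ k)]
    simp_rw [specFactor_mul_conj]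
  rw [key]
  exact ⟨by rw [ofReal_re]; exact integral_nonneg fun x => normSq_nonneg _, ofReal_im _⟩
end
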